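/- For all real numbers b ≥ 0, c > 0 and t ≥ 0, exp(−c(e^t − 1) + b t) ≤ max(1, (⟨b⟩/c)^b); in particular sup_{t ≥ 0} exp(−c(e^t − 1) + b t) ≤ max(1, (⟨b⟩/c)^b). -/

import Mathlib

/-!
The exponent `-c(e^t - 1) + b t` is concave in `t` with critical point `e^t = b/c`. If `b ≤ c` that
point lies in `t ≤ 0`, so the exponent is at most its value `0` at `t = 0`. If `c < b` the maximal
value is `(c - b) + b log (b/c) ≤ b log (b/c)`, and `b ≤ √(1 + b²)`. Both cases follow from the
tangent line inequality `x + 1 ≤ e^x`, at `x = t` and `x = t - log (b/c)` respectively.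

In the supremum `⨆ t ∈ Set.Ici 0`, the inner supremum is the junk value `sSup ∅ = 0` for `t < 0`;
this is harmless because the bound is nonnegative.
-/

/-- For `b ≥ 0`, `c > 0` and `t ≥ 0`, one has
`exp(-c(e^t - 1) + b t) ≤ max 1 ((⟨b⟩/c)^b)` where `⟨b⟩ = √(1+b²)`;
in particular the supremum over `t ≥ 0` satisfies the same bound. -/
theorem exp_decay_bound (b c : ℝ) (hb : 0 ≤ b) (hc : 0 < c) :
    (∀ t : ℝ, 0 ≤ t →
      Real.exp (-c * (Real.exp t - 1) + b * t) ≤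
        max 1 ((Real.sqrt (1 + b ^ 2) / c) ^ b)) ∧
    (⨆ t ∈ Set.Ici (0 : ℝ), Real.exp (-c * (Real.exp t - 1) + b * t)) ≤
      max 1 ((Real.sqrt (1 + b ^ 2) / c) ^ b) := by
  have key : ∀ t : ℝ, 0 ≤ t →
      Real.exp (-c * (Real.exp t - 1) + b * t) ≤
        max 1 ((Real.sqrt (1 + b ^ 2) / c) ^ b) := by
    intro t ht
    rcases le_or_gt b c with hbc | hcb
    · apply le_max_of_le_left
      rw [Real.exp_le_one_iff]
      nlinarith [Real.add_one_le_exp t]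
    · apply le_max_of_le_right
      have hb0 : 0 < b := hc.trans hcb
      have hdiv : 0 < b / c := div_pos hb0 hc
      have hexp : c * Real.exp t = b * Real.exp (t - Real.log (b / c)) := by
        rw [Real.exp_sub, Real.exp_log hdiv]
        field_simp
      have htangent := mul_le_mul_of_nonneg_left
        (Real.add_one_le_exp (t - Real.log (b / c))) hb
      calc Real.exp (-c * (Real.exp t - 1) + b * t)
          ≤ Real.exp (Real.log (b / c) * b) := by
            apply Real.exp_le_exp.mpr
            linarith
        _ = (b / c) ^ b := (Real.rpow_def_of_pos hdiv b).symm
        _ ≤ (Real.sqrt (1 + b ^ 2) / c) ^ b := by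
            have hle : b ≤ Real.sqrt (1 + b ^ 2) := Real.le_sqrt_of_sq_le (by linarith)
            gcongr
  have hnonneg : (0 : ℝ) ≤ max 1 ((Real.sqrt (1 + b ^ 2) / c) ^ b) :=
    zero_le_one.trans (le_max_left _ _)
  exact ⟨key, Real.iSup_le (fun t => Real.iSup_le (fun ht => key t ht) hnonneg) hnonneg⟩
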